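/- Let $k$ be a field of characteristic $p > 0$ and $F = xy(x-y)(x-ty) \in k[t][x,y]$, with $R_F = k[t][x,y]/(F)$ and $M_F = R_F/(x,y)R_F$. The set $\bigcup_{e \geq 1} \mathrm{Ass}_{R_F}\, F^e(M_F) = \bigcup_{e \geq 1} \mathrm{Ass}_{R_F}\, R_F/(x^{p^e}, y^{p^e})R_F$ has infinitely many maximal elements. -/

import Mathlib

open MvPolynomial

/-!
Write `τ m = 1 + t + ⋯ + t ^ (m - 1)` and `q = p ^ e`. In `R_F / (x ^ q, y ^ q)` the relation
`F = 0` says that the monomials of degree `q + 1` divisible by `x y` satisfy a linear recurrence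
with characteristic polynomial `(z - 1) (z - t)`. Since `τ` solves this recurrence, these monomials
are the multiples `τ i • w` of `w = x ^ 2 y ^ (q - 1)`, which is also the class of
`x y (x - y) y ^ (q - 2)`, and the vanishing of `x ^ q y` gives `τ (q - 1) • w = 0`. As `x` and `y`
kill `w`, the annihilator of `w` is the preimage of an ideal of `k[t]` under `x, y ↦ 0`; reading off
the coefficient of `w` through a linear functional shows that this ideal is generated by
`τ (q - 1)`. Hence the preimage in `R_F` of every maximal ideal of `k[t]` containing some
`τ (q - 1)` is an associated prime, and it is maximal. There are infinitely many of them because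
the polynomials `τ (q - 1)` are squarefree of unbounded degree.
-/

open Finset in
lemma geom_sum_add_two {A : Type*} [CommRing A] (t : A) (n : ℕ) :
    ∑ l ∈ range (n + 2), t ^ l =
      (1 + t) * ∑ l ∈ range (n + 1), t ^ l - t * ∑ l ∈ range n, t ^ l := by
  simp only [sum_range_succ]
  ring

section QuarticRelation

variable {B : Type*} [CommRing B] {x y t : B} {n : ℕ}

lemma pow_mul_pow_eq_geom_sum_mul (hF : x * y * (x - y) * (x - t * y) = 0) (hy : y ^ (n + 2) = 0)
    (i j : ℕ) (hij : i + j = n + 1) :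
    x ^ (i + 1) * y ^ (j + 1) = (∑ l ∈ Finset.range i, t ^ l) * (x ^ 2 * y ^ (n + 1)) := by
  induction i using Nat.twoStepInduction generalizing j with
  | zero =>
    obtain rfl : j = n + 1 := by lia
    simp [hy]
  | one =>
    obtain rfl : j = n := by lia
    simp
  | more i ih₀ ih₁ =>
    have h₀ := ih₀ (j + 2) (by lia)
    have h₁ := ih₁ (j + 1) (by lia)
    rw [geom_sum_add_two]
    linear_combination x ^ i * y ^ j * hF + (1 + t) * h₁ - t * h₀

lemma geom_sum_mul_sq_mul_pow_eq_zero (hF : x * y * (x - y) * (x - t * y) = 0)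
    (hx : x ^ (n + 2) = 0) (hy : y ^ (n + 2) = 0) :
    (∑ l ∈ Finset.range (n + 1), t ^ l) * (x ^ 2 * y ^ (n + 1)) = 0 := by
  rw [← pow_mul_pow_eq_geom_sum_mul hF hy (n + 1) 0 rfl, hx, zero_mul]

lemma mul_sq_mul_pow_eq_zero (hF : x * y * (x - y) * (x - t * y) = 0) (hy : y ^ (n + 2) = 0) :
    x * (x ^ 2 * y ^ (n + 1)) = 0 := by
  linear_combination y ^ n * hF + ((1 + t) * x ^ 2 - t * x * y) * hy

end QuarticRelation

lemma map_mul_eq_map_C_constantCoeff_mul {σ A B : Type*} [CommSemiring A] [Semiring B]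
    (f : MvPolynomial σ A →+* B) {w : B} (hw : ∀ i, f (X i) * w = 0) (s : MvPolynomial σ A) :
    f s * w = f (C (constantCoeff s)) * w := by
  induction s using MvPolynomial.induction_on with
  | C a => rw [constantCoeff_C]
  | add u v hu hv => simp only [map_add, add_mul, hu, hv]
  | mul_X u i _ => simp [mul_assoc, hw]

open scoped Pointwise in
lemma map_mem_of_mem_ideal_span {σ A M : Type*} [CommSemiring A] [AddCommMonoid M] [Module A M]
    (φ : MvPolynomial σ A →ₗ[A] M) (N : Submodule A M) {G : Set (MvPolynomial σ A)}
    (hG : ∀ g ∈ G, ∀ d, φ (monomial d 1 * g) ∈ N) {s : MvPolynomial σ A} (hs : s ∈ Ideal.span G) :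
    φ s ∈ N := by
  have hspan := Submodule.span_smul_of_span_eq_top (basisMonomials σ A).span_eq G
  suffices Submodule.span A (Set.range (basisMonomials σ A) • G) ≤ N.comap φ from
    this (hspan ▸ hs)
  rw [Submodule.span_le]
  rintro _ ⟨_, ⟨d, rfl⟩, g, hg, rfl⟩
  simpa using hG g hg d

lemma mem_colon_bot_singleton_mk_iff {R : Type*} [CommRing R] {J : Ideal R} {r v : R} :
    r ∈ (⊥ : Submodule R (R ⧸ J)).colon {Ideal.Quotient.mk J v} ↔ r * v ∈ J := by
  rw [Submodule.mem_colon_singleton, Submodule.mem_bot]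
  exact Ideal.Quotient.eq_zero_iff_mem

section Quartic

variable {A : Type*} [CommRing A]

/-- The form `F = x y (x - y) (x - t y)` of the paper, over an arbitrary coefficient ring. -/
noncomputable abbrev quartic (t : A) : MvPolynomial (Fin 2) A :=
  X 0 * X 1 * (X 0 - X 1) * (X 0 - C t * X 1)

/-- The ring `R_F = A[x, y] / (F)` of the paper. -/
abbrev QuarticRing (t : A) : Type _ := MvPolynomial (Fin 2) A ⧸ Ideal.span {quartic t}

/-- The ideal `(x ^ q, y ^ q)` of `R_F`; when `q = p ^ e`, the quotient by it is `F^e(M_F)`. -/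
noncomputable abbrev frobeniusPower (t : A) (q : ℕ) : Ideal (QuarticRing t) :=
  Ideal.span {Ideal.Quotient.mk (Ideal.span {quartic t}) (X 0) ^ q,
    Ideal.Quotient.mk (Ideal.span {quartic t}) (X 1) ^ q}

/-- The augmentation `R_F → A`, setting `x = y = 0`. -/
noncomputable def augmentation (t : A) : QuarticRing t →+* A :=
  Ideal.Quotient.lift _ constantCoeff <| (Ideal.span_singleton_le_iff_mem (RingHom.ker _)).2 <| by
    simp [RingHom.mem_ker]

lemma augmentation_mk (t : A) (s : MvPolynomial (Fin 2) A) :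
    augmentation t (Ideal.Quotient.mk _ s) = constantCoeff s :=
  rfl

lemma augmentation_surjective (t : A) : Function.Surjective (augmentation t) :=
  fun a ↦ ⟨Ideal.Quotient.mk _ (C a), by rw [augmentation_mk, constantCoeff_C]⟩

lemma mk_mem_frobeniusPower_iff {t : A} {q : ℕ} {s : MvPolynomial (Fin 2) A} :
    Ideal.Quotient.mk _ s ∈ frobeniusPower t q ↔
      s ∈ Ideal.span {X 0 ^ q, X 1 ^ q, quartic t} := by
  rw [frobeniusPower, ← map_pow, ← map_pow, ← Set.image_pair, ← Ideal.map_span,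
    Ideal.mem_quotient_iff_mem_sup, ← Ideal.span_union, Set.insert_union, Set.singleton_union]

/-- The coefficient of `w = x ^ 2 y ^ (n + 1)` in `x ^ a y ^ b`, for the relations which hold
modulo `(y ^ (n + 2), F)` between the monomials of degree `n + 3`. -/
def geomSumWeight (t : A) (n : ℕ) : ℕ → ℕ → A
  | i + 1, j + 1 => if i + j = n + 1 then ∑ l ∈ Finset.range i, t ^ l else 0
  | _, _ => 0

/-- The linear functional on `A[x, y]` with value `geomSumWeight t n a b` at `x ^ a y ^ b`. Modulo
`1 + t + ⋯ + t ^ n` it vanishes on `(x ^ (n + 2), y ^ (n + 2), F)`. -/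
noncomputable def geomSumFunctional (t : A) (n : ℕ) : MvPolynomial (Fin 2) A →ₗ[A] A :=
  (basisMonomials (Fin 2) A).constr A fun d ↦ geomSumWeight t n (d 0) (d 1)

lemma geomSumFunctional_monomial (t : A) (n : ℕ) (d : Fin 2 →₀ ℕ) :
    geomSumFunctional t n (monomial d 1) = geomSumWeight t n (d 0) (d 1) :=
  (basisMonomials (Fin 2) A).constr_basis A _ d

lemma geomSumFunctional_X_pow_mul_X_pow (t : A) (n a b : ℕ) :
    geomSumFunctional t n (X 0 ^ a * X 1 ^ b) = geomSumWeight t n a b := by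
  have h := geomSumFunctional_monomial t n (Finsupp.single 0 a + Finsupp.single 1 b)
  simpa [monomial_fin_two] using h

lemma geomSumFunctional_X_pow_mul_X_pow_mul_quartic (t : A) (n i j : ℕ) :
    geomSumFunctional t n (X 0 ^ i * X 1 ^ j * quartic t) = 0 := by
  have hexpand : X 0 ^ i * X 1 ^ j * quartic t =
      X 0 ^ (i + 3) * X 1 ^ (j + 1) - (1 + t) • (X 0 ^ (i + 2) * X 1 ^ (j + 2)) +
        t • (X 0 ^ (i + 1) * X 1 ^ (j + 3)) := by
    simp only [smul_eq_C_mul, map_add, map_one]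
    ring
  simp only [hexpand, map_add, map_sub, map_smul, geomSumFunctional_X_pow_mul_X_pow, geomSumWeight,
    smul_eq_mul]
  by_cases hij : i + j + 1 = n
  · rw [if_pos (by lia), if_pos (by lia), if_pos (by lia), geom_sum_add_two]
    ring
  · rw [if_neg (by lia), if_neg (by lia), if_neg (by lia)]
    ring

lemma geom_sum_dvd_geomSumWeight_add_left (t : A) (n i j : ℕ) :
    ∑ l ∈ Finset.range (n + 1), t ^ l ∣ geomSumWeight t n (i + n + 2) j := by
  cases j with
  | zero => exact dvd_zero _
  | succ j =>
    rw [geomSumWeight]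
    split_ifs with h
    · obtain rfl : i = 0 := by lia
      rw [zero_add]
    · exact dvd_zero _

lemma geomSumWeight_add_right (t : A) (n i j : ℕ) : geomSumWeight t n i (j + n + 2) = 0 := by
  cases i with
  | zero => rfl
  | succ i =>
    rw [geomSumWeight]
    split_ifs with h
    · obtain rfl : i = 0 := by lia
      rfl
    · rfl

lemma geom_sum_dvd_geomSumFunctional {t : A} {n : ℕ} {s : MvPolynomial (Fin 2) A}
    (hs : s ∈ Ideal.span {X 0 ^ (n + 2), X 1 ^ (n + 2), quartic t}) :
    ∑ l ∈ Finset.range (n + 1), t ^ l ∣ geomSumFunctional t n s := by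
  rw [← Ideal.mem_span_singleton]
  refine map_mem_of_mem_ideal_span _ _ (fun g hg d ↦ ?_) hs
  rw [Ideal.mem_span_singleton, monomial_fin_two, C_1, one_mul]
  rcases hg with rfl | rfl | rfl
  · rw [mul_right_comm, ← pow_add, geomSumFunctional_X_pow_mul_X_pow]
    exact geom_sum_dvd_geomSumWeight_add_left t n _ _
  · rw [mul_assoc, ← pow_add, geomSumFunctional_X_pow_mul_X_pow, ← add_assoc,
      geomSumWeight_add_right]
    exact dvd_zero _
  · rw [geomSumFunctional_X_pow_mul_X_pow_mul_quartic]
    exact dvd_zero _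

lemma geomSumFunctional_C_mul_sq_mul_pow (t : A) (n : ℕ) (a : A) :
    geomSumFunctional t n (C a * (X 0 ^ 2 * X 1 ^ (n + 1))) = a := by
  rw [← smul_eq_C_mul, map_smul, geomSumFunctional_X_pow_mul_X_pow, geomSumWeight,
    if_pos (add_comm 1 n), Finset.sum_range_one, pow_zero, smul_eq_mul, mul_one]

lemma mul_sq_mul_pow_mem_span_iff {t : A} {n : ℕ} {s : MvPolynomial (Fin 2) A} :
    s * (X 0 ^ 2 * X 1 ^ (n + 1)) ∈ Ideal.span {X 0 ^ (n + 2), X 1 ^ (n + 2), quartic t} ↔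
      ∑ l ∈ Finset.range (n + 1), t ^ l ∣ constantCoeff s := by
  set I := Ideal.span {X 0 ^ (n + 2), X 1 ^ (n + 2), quartic t}
  set π := Ideal.Quotient.mk I
  have hgen {g} (hg : g ∈ ({X 0 ^ (n + 2), X 1 ^ (n + 2), quartic t} : Set _)) : π g = 0 :=
    Ideal.Quotient.eq_zero_iff_mem.2 (Ideal.subset_span hg)
  have hx : π (X 0) ^ (n + 2) = 0 := by simpa only [map_pow] using hgen (Or.inl rfl)
  have hy : π (X 1) ^ (n + 2) = 0 := by simpa only [map_pow] using hgen (Or.inr (Or.inl rfl))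
  have hF : π (X 0) * π (X 1) * (π (X 0) - π (X 1)) * (π (X 0) - π (C t) * π (X 1)) = 0 := by
    simpa only [map_mul, map_sub] using hgen (Or.inr (Or.inr rfl))
  have hvars : ∀ i, π (X i) * (π (X 0) ^ 2 * π (X 1) ^ (n + 1)) = 0 :=
    Fin.forall_fin_two.2
      ⟨mul_sq_mul_pow_eq_zero hF hy, by linear_combination π (X 0) ^ 2 * hy⟩
  have hconst : π (s * (X 0 ^ 2 * X 1 ^ (n + 1))) =
      π (C (constantCoeff s) * (X 0 ^ 2 * X 1 ^ (n + 1))) := by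
    simpa only [map_mul, map_pow] using map_mul_eq_map_C_constantCoeff_mul π hvars s
  rw [← Ideal.Quotient.eq_zero_iff_mem, hconst]
  constructor
  · intro h
    simpa only [geomSumFunctional_C_mul_sq_mul_pow] using
      geom_sum_dvd_geomSumFunctional (Ideal.Quotient.eq_zero_iff_mem.1 h)
  · rintro ⟨c, hc⟩
    have hτ := geom_sum_mul_sq_mul_pow_eq_zero hF hx hy
    simp only [hc, map_mul, map_sum, map_pow]
    linear_combination π (C c) * hτ

lemma mul_mk_sq_mul_pow_mem_frobeniusPower_iff {t : A} {n : ℕ} {r : QuarticRing t} :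
    r * Ideal.Quotient.mk _ (X 0 ^ 2 * X 1 ^ (n + 1)) ∈ frobeniusPower t (n + 2) ↔
      ∑ l ∈ Finset.range (n + 1), t ^ l ∣ augmentation t r := by
  obtain ⟨s, rfl⟩ := Ideal.Quotient.mk_surjective r
  rw [← map_mul, mk_mem_frobeniusPower_iff, mul_sq_mul_pow_mem_span_iff, augmentation_mk]

-- If `g h` generates the annihilator of `w`, modulo `x` and `y`, then `g` generates that of `h w`.
lemma comap_augmentation_mem_associatedPrimes {t : A} {n : ℕ}
    (hreg : ∑ l ∈ Finset.range (n + 1), t ^ l ∈ nonZeroDivisors A) {M : Ideal A} [M.IsPrime]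
    [M.IsPrincipal] (hM : ∑ l ∈ Finset.range (n + 1), t ^ l ∈ M) :
    M.comap (augmentation t) ∈
      associatedPrimes (QuarticRing t) (QuarticRing t ⧸ frobeniusPower t (n + 2)) := by
  obtain ⟨g, rfl⟩ := Submodule.IsPrincipal.principal M
  obtain ⟨h, hgh⟩ := Ideal.mem_span_singleton.1 hM
  have hh : h ∈ nonZeroDivisors A := (mul_mem_nonZeroDivisors.1 (hgh ▸ hreg)).2
  have hP : ((Ideal.span {g}).comap (augmentation t)).IsPrime := inferInstance
  refine ⟨hP, Ideal.Quotient.mk _ (Ideal.Quotient.mk _ (C h) *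
    Ideal.Quotient.mk _ (X 0 ^ 2 * X 1 ^ (n + 1))), ?_⟩
  suffices (⊥ : Submodule _ _).colon {_} = (Ideal.span {g}).comap (augmentation t) by
    rw [this, hP.radical]
  ext r
  rw [mem_colon_bot_singleton_mk_iff, ← mul_assoc,
    mul_mk_sq_mul_pow_mem_frobeniusPower_iff, map_mul, augmentation_mk, constantCoeff_C, hgh,
    dvd_cancel_right_mem_nonZeroDivisors hh, Ideal.mem_comap, Ideal.mem_span_singleton]

end Quartic

section PolynomialFactors

variable {k : Type*} [Field k]

lemma infinite_setOf_isMaximal_exists_mem_of_squarefree {ι : Type*} {f : ι → Polynomial k}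
    (hf : ∀ i, Squarefree (f i)) (hdeg : ∀ d, ∃ i, d < (f i).natDegree) :
    {M : Ideal (Polynomial k) | M.IsMaximal ∧ ∃ i, f i ∈ M}.Infinite := by
  intro hfin
  obtain ⟨N, hNmem, hN⟩ : ∃ N ∈ ∏ M ∈ hfin.toFinset, M, N ≠ 0 := by
    refine Submodule.exists_mem_ne_zero_of_ne_bot (Finset.prod_ne_zero_iff.2 fun M hM hbot ↦ ?_)
    obtain ⟨-, i, hi⟩ := hfin.mem_toFinset.1 hM
    exact (hf i).ne_zero (by simpa [hbot] using hi)
  obtain ⟨i, hi⟩ := hdeg N.natDegree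
  have hdvd : f i ∣ N := by
    rw [← Ideal.mem_span_singleton,
      ← (isRadical_iff_span_singleton.1 (hf i).isRadical).radical, Ideal.radical_eq_sInf,
      Submodule.mem_sInf]
    rintro P ⟨hfP, hP⟩
    have hfP := (Ideal.span_singleton_le_iff_mem P).1 hfP
    have hPmax := hP.isMaximal fun hbot ↦ (hf i).ne_zero (by simpa [hbot] using hfP)
    exact Ideal.prod_le_inf.trans (Finset.inf_le (hfin.mem_toFinset.2 ⟨hPmax, i, hfP⟩)) hNmem
  exact hi.not_ge (Polynomial.natDegree_le_of_dvd hdvd hN)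

lemma squarefree_geom_sum_X {m : ℕ} (hm : (m : k) ≠ 0) :
    Squarefree (∑ l ∈ Finset.range m, (Polynomial.X : Polynomial k) ^ l) :=
  (Polynomial.X_pow_sub_one_separable_iff.2 hm).squarefree.squarefree_of_dvd
    ⟨_, (geom_sum_mul _ _).symm⟩

lemma natDegree_geom_sum_X_add_one {R : Type*} [Semiring R] [Nontrivial R] (m : ℕ) :
    (∑ l ∈ Finset.range (m + 1), (Polynomial.X : Polynomial R) ^ l).natDegree = m := by
  refine Polynomial.natDegree_eq_of_le_of_coeff_ne_zero
    (Polynomial.natDegree_sum_le_of_forall_le _ _ fun l hl ↦ ?_) ?_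
  · exact (Polynomial.natDegree_X_pow_le l).trans (Nat.lt_succ_iff.1 (Finset.mem_range.1 hl))
  · simp [Polynomial.coeff_X_pow]

lemma infinite_setOf_isMaximal_geom_sum_mem (k : Type*) [Field k] (p : ℕ) [Fact p.Prime]
    [CharP k p] :
    {M : Ideal (Polynomial k) | M.IsMaximal ∧
      ∃ e, ∑ l ∈ Finset.range (p ^ (e + 1) - 1), Polynomial.X ^ l ∈ M}.Infinite := by
  have hp : p.Prime := Fact.out
  refine infinite_setOf_isMaximal_exists_mem_of_squarefree
    (fun e ↦ squarefree_geom_sum_X ?_) fun d ↦ ⟨d + 1, ?_⟩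
  · simp [Nat.cast_pred (pow_pos hp.pos (e + 1))]
  · have := (d + 2).lt_pow_self hp.one_lt
    obtain ⟨m, hm⟩ : ∃ m, p ^ (d + 2) - 1 = m + 1 := ⟨p ^ (d + 2) - 2, by lia⟩
    rw [hm, natDegree_geom_sum_X_add_one]
    lia

end PolynomialFactors

/-- For `k` of characteristic `p > 0`, `R_F = k[t][x,y]/(xy(x-y)(x-ty))` and
`M_F = R_F/(x,y)`, the set `⋃_{e ≥ 1} Ass_{R_F} F^e(M_F) = ⋃_{e ≥ 1} Ass R_F/(x^{p^e},y^{p^e})`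
has infinitely many maximal elements. -/
theorem stmt_12 (k : Type*) [Field k] (p : ℕ) [Fact p.Prime] [CharP k p]
    (F : MvPolynomial (Fin 2) (Polynomial k))
    (hF : F = X 0 * X 1 * (X 0 - X 1) * (X 0 - C Polynomial.X * X 1))
    (𝒜 : Set (Ideal (MvPolynomial (Fin 2) (Polynomial k) ⧸ Ideal.span {F})))
    (h𝒜 : 𝒜 = { P | ∃ e : ℕ, 1 ≤ e ∧
        P ∈ associatedPrimes
          (MvPolynomial (Fin 2) (Polynomial k) ⧸ Ideal.span {F})
          ((MvPolynomial (Fin 2) (Polynomial k) ⧸ Ideal.span {F}) ⧸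
            Ideal.span
              {Ideal.Quotient.mk (Ideal.span {F}) (X 0 : MvPolynomial (Fin 2) (Polynomial k)) ^ p ^ e,
               Ideal.Quotient.mk (Ideal.span {F}) (X 1 : MvPolynomial (Fin 2) (Polynomial k)) ^ p ^ e}) }) :
    { P ∈ 𝒜 | ∀ Q ∈ 𝒜, P ≤ Q → P = Q }.Infinite := by
  obtain rfl : F = quartic Polynomial.X := hF
  subst h𝒜
  have hinj := Ideal.comap_injective_of_surjective _
    (augmentation_surjective (Polynomial.X : Polynomial k))
  refine ((infinite_setOf_isMaximal_geom_sum_mem k p).image hinj.injOn).mono ?_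
  rintro _ ⟨M, ⟨hMmax, e, hM⟩, rfl⟩
  obtain ⟨n, hn⟩ : ∃ n, p ^ (e + 1) = n + 2 :=
    Nat.exists_eq_add_of_le' (Nat.one_lt_pow e.succ_ne_zero (Fact.out : p.Prime).one_lt)
  rw [hn] at hM
  have hass := comap_augmentation_mem_associatedPrimes
    (mem_nonZeroDivisors_of_ne_zero (Polynomial.monic_geom_sum_X n.succ_ne_zero).ne_zero) hM
  refine ⟨⟨e + 1, e.succ_pos, hn ▸ hass⟩, ?_⟩
  rintro Q ⟨_, _, hQ⟩ hle
  exact (Ideal.comap_isMaximal_of_surjective _ (augmentation_surjective _)).eq_of_le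
    hQ.isPrime.ne_top hle
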